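/- (Claim 6: direct part of Theorem 8, common-message BC, with exponentially decaying errors and deterministic encoders.) Let W(y,z|x) be a two-receiver BC, let P be a PMF on 𝒳, and let rates R, R_𝒴, R_𝒵 satisfy 0 < R < min{I(P,W_𝒴), I(P,W_𝒵)}, 0 < R_𝒴 < I(P, W_𝒴), and 0 < R_𝒵 < I(P, W_𝒵). Then there exist τ > 0 and n₀ ∈ ℕ such that for every n ≥ n₀ there exists an (n, ℳ, ℳ_𝒴, ℳ_𝒵, e^{−nτ}, e^{−nτ}, e^{−nτ}, e^{−nτ}) average-error ID code for the BC with a common message satisfying (1/n)·log log |ℳ| ≥ R, (1/n)·log log |ℳ_𝒴| ≥ R_𝒴, and (1/n)·log log |ℳ_𝒵| ≥ R_𝒵, in which every encoding PMF Q_{m,m_𝒴,m_𝒵} is a point mass on a single sequence in 𝒳ⁿ. -/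

import Mathlib

open scoped Classical
open Finset

noncomputable section

/-- `P` is a probability mass function on the finite type `X`. -/
def IsPMF {X : Type*} [Fintype X] (P : X → ℝ) : Prop :=
  (∀ x, 0 ≤ P x) ∧ ∑ x, P x = 1

/-- `W` is a (discrete memoryless) channel from `X` to `Y`. -/
def IsChannel {X Y : Type*} [Fintype Y] (W : X → Y → ℝ) : Prop :=
  (∀ x y, 0 ≤ W x y) ∧ ∀ x, ∑ y, W x y = 1

/-- The `n`-fold memoryless extension `W^n(𝐲|𝐱) = ∏ᵢ W(yᵢ|xᵢ)`. -/
def Wn {X Y : Type*} (W : X → Y → ℝ) (n : ℕ) (x : Fin n → X) (y : Fin n → Y) : ℝ :=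
  ∏ i, W (x i) (y i)

/-- Mutual information `I(P,W)` (natural logarithm), with the convention that
terms with `P x * W x y = 0` contribute `0`. -/
def mutInf {X Y : Type*} [Fintype X] [Fintype Y] (P : X → ℝ) (W : X → Y → ℝ) : ℝ :=
  ∑ x, ∑ y, if P x * W x y = 0 then 0
    else P x * W x y * Real.log (W x y / ∑ x', P x' * W x' y)

/-- The error requirements of an `(n, M, l1, l2)` ID code for the DMC `W`:
maximum probability of missed identification at most `l1`, maximum probability
of wrong identification at most `l2`. -/
def IDCodeErr {X Y M : Type*} [Fintype X] [Fintype Y]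
    (n : ℕ) (W : X → Y → ℝ) (Q : M → (Fin n → X) → ℝ)
    (D : M → Finset (Fin n → Y)) (l1 l2 : ℝ) : Prop :=
  (∀ m, ∑ x, Q m x * ∑ y ∈ (D m)ᶜ, Wn W n x y ≤ l1) ∧
  (∀ m m', m ≠ m' → ∑ x, Q m x * ∑ y ∈ D m', Wn W n x y ≤ l2)

/-- `(n, M, l1, l2)` ID code for the DMC `W`. -/
def IsIDCode {X Y M : Type*} [Fintype X] [Fintype Y]
    (n : ℕ) (W : X → Y → ℝ) (Q : M → (Fin n → X) → ℝ)
    (D : M → Finset (Fin n → Y)) (l1 l2 : ℝ) : Prop :=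
  (∀ m, IsPMF (Q m)) ∧ IDCodeErr n W Q D l1 l2

/-- `W` is a two-receiver broadcast channel from `X` to `Y × Z`. -/
def IsBC {X Y Z : Type*} [Fintype Y] [Fintype Z] (W : X → Y → Z → ℝ) : Prop :=
  (∀ x y z, 0 ≤ W x y z) ∧ ∀ x, ∑ y, ∑ z, W x y z = 1

/-- Marginal channel to terminal `Y`. -/
def margY {X Y Z : Type*} [Fintype Z] (W : X → Y → Z → ℝ) : X → Y → ℝ :=
  fun x y => ∑ z, W x y z

/-- Marginal channel to terminal `Z`. -/
def margZ {X Y Z : Type*} [Fintype Y] (W : X → Y → Z → ℝ) : X → Z → ℝ :=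
  fun x z => ∑ y, W x y z

/-- Average-error ID code for the BC with a common message: each receiver
identifies the pair (common message, its private message) jointly; the mixture
codes, averaged over the other receiver's private message and indexed by the
corresponding pairs, are ID codes for the marginal channels. -/
def IsCMIDCode {X Y Z : Type*} [Fintype X] [Fintype Y] [Fintype Z]
    (n k kY kZ : ℕ) (W : X → Y → Z → ℝ)
    (Q : Fin k → Fin kY → Fin kZ → (Fin n → X) → ℝ)
    (DY : Fin k → Fin kY → Finset (Fin n → Y))
    (DZ : Fin k → Fin kZ → Finset (Fin n → Z))
    (l1Y l2Y l1Z l2Z : ℝ) : Prop :=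
  (∀ m my mz, IsPMF (Q m my mz)) ∧
  IDCodeErr n (margY W)
    (fun p : Fin k × Fin kY => fun x => (kZ : ℝ)⁻¹ * ∑ mz, Q p.1 p.2 mz x)
    (fun p : Fin k × Fin kY => DY p.1 p.2) l1Y l2Y ∧
  IDCodeErr n (margZ W)
    (fun p : Fin k × Fin kZ => fun x => (kY : ℝ)⁻¹ * ∑ my, Q p.1 my p.2 x)
    (fun p : Fin k × Fin kZ => DZ p.1 p.2) l1Z l2Z

/-- Greedy packing: if every `r`-neighbourhood is small, there is a large family of pairwise
unrelated points. -/
lemma exists_finset_pairwise_not_rel {Ω : Type*} [Fintype Ω] [Nonempty Ω] (r : Ω → Ω → Prop)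
    (hrefl : ∀ x, r x x) (hsymm : ∀ x y, r x y → r y x) (B : ℝ)
    (hB : ∀ x, ((univ.filter (fun y => r x y)).card : ℝ) ≤ B) (N : ℕ)
    (hN : (N : ℝ) * B < Fintype.card Ω) :
    ∃ s : Finset Ω, s.card = N ∧ ∀ x ∈ s, ∀ y ∈ s, x ≠ y → ¬ r x y := by
  induction N with
  | zero => exact ⟨∅, by simp, by simp⟩
  | succ N ih =>
    have hB0 : 0 ≤ B := le_trans (Nat.cast_nonneg _) (hB (Classical.arbitrary Ω))
    obtain ⟨s, hs, hpair⟩ := ih (by push_cast at hN; linarith)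
    have hcov : ((s.biUnion fun x => univ.filter (fun y => r x y)).card : ℝ)
        < Fintype.card Ω := by
      calc ((s.biUnion fun x => univ.filter (fun y => r x y)).card : ℝ)
          ≤ ∑ x ∈ s, ((univ.filter (fun y => r x y)).card : ℝ) := by
            exact_mod_cast card_biUnion_le
        _ ≤ ∑ x ∈ s, B := sum_le_sum fun x _ => hB x
        _ = N * B := by rw [sum_const, hs, nsmul_eq_mul]
        _ < _ := by push_cast at hN; linarith
    obtain ⟨y, hy⟩ : ∃ y, y ∉ s.biUnion fun x => univ.filter (fun y => r x y) := by
      by_contra! h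
      rw [eq_univ_iff_forall.2 h] at hcov
      simp at hcov
    simp only [mem_biUnion, mem_filter, mem_univ, true_and, not_exists, not_and] at hy
    have hys : y ∉ s := fun h => hy y h (hrefl y)
    refine ⟨insert y s, by rw [card_insert_of_notMem hys, hs], ?_⟩
    intro a ha b hb hab
    rcases mem_insert.1 ha with h1 | h1 <;> rcases mem_insert.1 hb with h2 | h2
    · exact absurd (h1.trans h2.symm) hab
    · exact fun h => hy b h2 (hsymm _ _ (h1 ▸ h))
    · exact h2 ▸ hy a h1
    · exact hpair a h1 b h2 hab

lemma exp_le_one_add_two_mul {t : ℝ} (h0 : 0 ≤ t) (h1 : t ≤ 1) : Real.exp t ≤ 1 + 2 * t := by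
  have h := (abs_le.1 (Real.abs_exp_sub_one_sub_id_le (x := t) (by rwa [abs_of_nonneg h0]))).2
  nlinarith

/-- `f` and some constant shift of `g` agree on more than a fraction `ε` of the points. -/
def ShiftClose {B C : Type*} [Fintype B] [AddCommGroup C] (ε : ℝ) (f g : B → C) : Prop :=
  ∃ u : C, ε * Fintype.card B < ((univ.filter fun b => g b = f b + u).card : ℝ)

lemma ShiftClose.symm {B C : Type*} [Fintype B] [AddCommGroup C] {ε : ℝ} {f g : B → C}
    (h : ShiftClose ε f g) : ShiftClose ε g f := by
  obtain ⟨u, hu⟩ := h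
  refine ⟨-u, ?_⟩
  have : ∀ b, (f b = g b + -u) ↔ (g b = f b + u) := fun b => by
    rw [← sub_eq_add_neg, eq_sub_iff_add_eq, eq_comm]
  simpa only [this] using hu

/-- The number of functions agreeing with a given one, up to some constant shift, on more than
a fraction `ε` of the points. -/
lemma card_shift_agree_le {B C : Type*} [Fintype B] [Fintype C] [AddCommGroup C]
    (f : B → C) (ε : ℝ) :
    ((univ.filter fun g : B → C => ShiftClose ε f g).card : ℝ) ≤
      Fintype.card C * ((Fintype.card C : ℝ) ^ Fintype.card B *
        Real.exp (2 * Fintype.card B / Fintype.card C - ε * Fintype.card B)) := by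
  have hC : (0 : ℝ) < Fintype.card C := by exact_mod_cast Fintype.card_pos
  have hu : ∀ u : C, ((univ.filter fun g : B → C =>
      ε * Fintype.card B < ((univ.filter fun b => g b = f b + u).card : ℝ)).card : ℝ) ≤
      (Fintype.card C : ℝ) ^ Fintype.card B *
        Real.exp (2 * Fintype.card B / Fintype.card C - ε * Fintype.card B) := by
    intro u
    calc ((univ.filter fun g : B → C =>
          ε * Fintype.card B < ((univ.filter fun b => g b = f b + u).card : ℝ)).card : ℝ)
        = ∑ g : B → C, if ε * Fintype.card B <
            ((univ.filter fun b => g b = f b + u).card : ℝ) then (1 : ℝ) else 0 := by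
          rw [sum_boole]
      _ ≤ ∑ g : B → C, (∏ b, Real.exp (if g b = f b + u then 1 else 0)) *
            Real.exp (- (ε * Fintype.card B)) := by
          refine sum_le_sum fun g _ => ?_
          rw [← Real.exp_sum, ← Real.exp_add, sum_boole]
          split_ifs with h
          · exact Real.one_le_exp (by linarith)
          · exact (Real.exp_pos _).le
      _ = (∏ b : B, ∑ v : C, Real.exp (if v = f b + u then 1 else 0)) *
            Real.exp (- (ε * Fintype.card B)) := by
          rw [← sum_mul, Fintype.prod_sum]
      _ ≤ (∏ b : B, Fintype.card C * Real.exp (2 / Fintype.card C)) *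
            Real.exp (- (ε * Fintype.card B)) := by
          refine mul_le_mul_of_nonneg_right (prod_le_prod (fun b _ => by positivity) ?_)
            (Real.exp_pos _).le
          intro b _
          have h1 : ∀ v : C, Real.exp (if v = f b + u then 1 else 0) ≤
              1 + (if v = f b + u then 2 else 0) := by
            intro v
            split_ifs
            · have := exp_le_one_add_two_mul zero_le_one le_rfl
              linarith
            · simp
          calc ∑ v : C, Real.exp (if v = f b + u then 1 else 0)
              ≤ ∑ v : C, (1 + (if v = f b + u then (2 : ℝ) else 0)) :=
                sum_le_sum fun v _ => h1 v
            _ = Fintype.card C * (2 / Fintype.card C + 1) := by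
                rw [sum_add_distrib]
                simp
                field_simp
                ring
            _ ≤ _ := mul_le_mul_of_nonneg_left (Real.add_one_le_exp _) hC.le
      _ = _ := by
          rw [prod_const, mul_pow, ← Real.exp_nat_mul, card_univ, mul_assoc, ← Real.exp_add]
          congr 2
          ring
  calc _ ≤ ((univ.biUnion fun u : C => univ.filter fun g : B → C =>
          ε * Fintype.card B < ((univ.filter fun b => g b = f b + u).card : ℝ)).card : ℝ) := by
        refine Nat.cast_le.2 (card_le_card ?_)
        intro g hg
        obtain ⟨u, hu⟩ := (mem_filter.1 hg).2
        exact mem_biUnion.2 ⟨u, mem_univ u, mem_filter.2 ⟨mem_univ g, hu⟩⟩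
    _ ≤ ∑ u : C, ((univ.filter fun g : B → C =>
          ε * Fintype.card B < ((univ.filter fun b => g b = f b + u).card : ℝ)).card : ℝ) := by
        exact_mod_cast card_biUnion_le
    _ ≤ _ := by
        refine (sum_le_sum fun u _ => hu u).trans ?_
        rw [sum_const, card_univ, nsmul_eq_mul]

/-- A large family of functions any two of which, even after constant shifts, agree on few
points. -/
lemma exists_shift_code {ι B C : Type*} [Fintype ι] [Fintype B] [Nonempty B] [Fintype C]
    [AddCommGroup C] (ε : ℝ) (hε0 : 0 ≤ ε) (hε1 : ε < 1)
    (h : (Fintype.card ι : ℝ) * Fintype.card C *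
      Real.exp (2 * Fintype.card B / Fintype.card C - ε * Fintype.card B) < 1) :
    ∃ F : ι → B → C, ∀ i j u v, (i, u) ≠ (j, v) →
      ((univ.filter fun b => F i b + u = F j b + v).card : ℝ) ≤ ε * Fintype.card B := by
  have hC : (0 : ℝ) < Fintype.card C := by exact_mod_cast Fintype.card_pos
  have hB : (0 : ℝ) < Fintype.card B := by exact_mod_cast Fintype.card_pos
  have hcount : (Fintype.card ι : ℝ) * (Fintype.card C * ((Fintype.card C : ℝ) ^ Fintype.card B *
      Real.exp (2 * Fintype.card B / Fintype.card C - ε * Fintype.card B))) <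
      Fintype.card (B → C) := by
    rw [Fintype.card_fun]
    push_cast
    have hpow : (0 : ℝ) < (Fintype.card C : ℝ) ^ Fintype.card B := by positivity
    calc _ = (Fintype.card C : ℝ) ^ Fintype.card B * ((Fintype.card ι : ℝ) * Fintype.card C *
          Real.exp (2 * Fintype.card B / Fintype.card C - ε * Fintype.card B)) := by ring
      _ < (Fintype.card C : ℝ) ^ Fintype.card B * 1 := by gcongr
      _ = _ := mul_one _
  obtain ⟨s, hs, hpair⟩ := exists_finset_pairwise_not_rel
    (fun f g : B → C => ShiftClose ε f g)
    (fun f => ⟨0, by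
      simp only [add_zero, filter_true, card_univ]
      nlinarith⟩)
    (fun f g => ShiftClose.symm) _ (fun f => card_shift_agree_le f ε) (Fintype.card ι) hcount
  have e : ι ≃ s := Fintype.equivOfCardEq (by simp [hs])
  refine ⟨fun i => (e i : B → C), fun i j u v hne => ?_⟩
  by_cases hij : i = j
  · subst hij
    have huv : u ≠ v := fun h => hne (by rw [h])
    have : (univ.filter fun b => (e i : B → C) b + u = (e i : B → C) b + v) = ∅ := by
      simp [huv]
    rw [this]
    rw [card_empty, Nat.cast_zero]
    positivity
  · have := hpair (e i) (e i).2 (e j) (e j).2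
      (fun h => hij (e.injective (Subtype.ext h)))
    rw [ShiftClose, not_exists] at this
    have h2 := not_lt.1 (this (u - v))
    have h3 : ∀ b, ((e i : B → C) b + u = (e j : B → C) b + v) ↔
        ((e j : B → C) b = (e i : B → C) b + (u - v)) := fun b => by
      rw [← add_sub_assoc, eq_sub_iff_add_eq, eq_comm]
    simpa only [h3] using h2

/-- Under a product distribution, a product over `j ∈ J` of factors, each of which depends on the
coordinate `j` and on coordinates outside `J` only, has expectation at most `K ^ #J` if every
factor has conditional expectation at most `K`. -/
lemma sum_prod_mul_prod_le_pow {I Ω : Type*} [Fintype I] [Fintype Ω] (p : Ω → ℝ)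
    (hp : IsPMF p) (J : Finset I) (H : (I → Ω) → Ω → ℝ) (K : ℝ)
    (hH0 : ∀ c x, 0 ≤ H c x) (hdep : ∀ c c', (∀ i, i ∉ J → c i = c' i) → H c = H c')
    (hK : ∀ c, ∑ x, p x * H c x ≤ K) :
    ∑ c : I → Ω, (∏ i, p (c i)) * ∏ j ∈ J, H c (c j) ≤ K ^ J.card := by
  have hΩ : Nonempty Ω := by
    by_contra h
    rw [not_nonempty_iff] at h
    simpa using hp.2
  let e := Equiv.piEquivPiSubtypeProd (fun i => i ∈ J) (fun _ : I => Ω)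
  let u₀ : {i // i ∈ J} → Ω := fun _ => hΩ.some
  have he : ∀ q i, e.symm q i = if h : i ∈ J then q.1 ⟨i, h⟩ else q.2 ⟨i, h⟩ := fun q i => rfl
  calc ∑ c : I → Ω, (∏ i, p (c i)) * ∏ j ∈ J, H c (c j)
      = ∑ q, (∏ i, p (e.symm q i)) * ∏ j ∈ J, H (e.symm q) (e.symm q j) :=
        (e.symm.sum_comp (fun c => (∏ i, p (c i)) * ∏ j ∈ J, H c (c j))).symm
    _ = ∑ v, (∏ i, p (v i)) * ∑ u : {i // i ∈ J} → Ω,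
          ∏ j, (p (u j) * H (e.symm (u₀, v)) (u j)) := by
        rw [Fintype.sum_prod_type, sum_comm]
        refine sum_congr rfl fun v _ => ?_
        rw [mul_sum]
        refine sum_congr rfl fun u _ => ?_
        have h1 : ∀ i : {i // i ∈ J}, e.symm (u, v) i = u i := fun i => by simp [he]
        have h2 : ∀ i : {i // i ∉ J}, e.symm (u, v) i = v i := fun i => by
          rw [he, dif_neg i.2]
        have h3 : H (e.symm (u, v)) = H (e.symm (u₀, v)) :=
          hdep _ _ fun i hi => by rw [he, he, dif_neg hi, dif_neg hi]
        have h4 : ∏ i, p (e.symm (u, v) i) = (∏ i, p (u i)) * ∏ i, p (v i) := by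
          rw [← Fintype.prod_subtype_mul_prod_subtype (fun i => i ∈ J)]
          simp only [h1, h2]
          congr!
        rw [h4, prod_mul_distrib, ← prod_coe_sort J]
        simp only [h1, h3]
        ring
    _ = ∑ v : {i // i ∉ J} → Ω, (∏ i, p (v i)) *
          ∏ _j : {i // i ∈ J}, ∑ x, p x * H (e.symm (u₀, v)) x := by
        refine sum_congr rfl fun v _ => ?_
        rw [Fintype.prod_sum]
    _ ≤ ∑ v : {i // i ∉ J} → Ω, (∏ i, p (v i)) * K ^ J.card := by
        refine sum_le_sum fun v _ => mul_le_mul_of_nonneg_left ?_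
          (prod_nonneg fun i _ => hp.1 _)
        rw [prod_const, card_univ, Fintype.card_coe]
        exact pow_le_pow_left₀ (sum_nonneg fun x _ => mul_nonneg (hp.1 x) (hH0 _ _)) (hK _) _
    _ = K ^ J.card := by
        rw [← sum_mul, ← Fintype.prod_sum]
        simp [hp.2]

lemma sum_prod_pmf {I Ω : Type*} [Fintype I] [DecidableEq I] [Fintype Ω] {p : Ω → ℝ}
    (hp : IsPMF p) :
    ∑ c : I → Ω, ∏ i, p (c i) = 1 := by
  rw [← Fintype.prod_sum]
  simp [hp.2]

lemma IsChannel.sum_subset_le_one {Ω Υ : Type*} [Fintype Υ] {V : Ω → Υ → ℝ} (hV : IsChannel V)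
    (x : Ω) (s : Finset Υ) : ∑ y ∈ s, V x y ≤ 1 := by
  rw [← hV.2 x]
  exact sum_le_sum_of_subset_of_nonneg (subset_univ _) fun y _ _ => hV.1 x y

lemma IsChannel.sum_biUnion_le {I Ω Υ : Type*} [Fintype Υ] {V : Ω → Υ → ℝ} (hV : IsChannel V)
    (x : Ω) (S : Finset I) (T : I → Finset Υ) :
    ∑ y ∈ S.biUnion T, V x y ≤ ∑ i ∈ S, ∑ y ∈ T i, V x y := by
  induction S using Finset.induction_on with
  | empty => simp
  | insert a s ha ih =>
    rw [biUnion_insert, sum_insert ha]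
    have h0 : 0 ≤ ∑ y ∈ T a ∩ s.biUnion T, V x y := sum_nonneg fun y _ => hV.1 x y
    have h1 := sum_union_inter (s₁ := T a) (s₂ := s.biUnion T) (f := V x)
    linarith

/-- Exponential moment of the total probability with which words of a random pool indexed by `S`
fall into the decoding set built from the words indexed by `S'`. -/
lemma pool_exp_moment_le {I Ω Υ : Type*} [Fintype I] [Fintype Ω] [Fintype Υ] (p : Ω → ℝ)
    (hp : IsPMF p) (V : Ω → Υ → ℝ) (hV : IsChannel V) (T : Ω → Finset Υ) (β : ℝ)
    (hβ : ∀ x', ∑ x, p x * ∑ y ∈ T x', V x y ≤ β) (S S' : Finset I) (L : ℕ)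
    (hS : S.card ≤ L) (hS' : S'.card ≤ L) :
    ∑ c : I → Ω, (∏ i, p (c i)) *
      Real.exp (∑ i ∈ S \ S', ∑ y ∈ S'.biUnion (fun i => T (c i)), V (c i) y) ≤
      Real.exp (2 * L * β * L) := by
  have hΩ : Nonempty Ω := by
    by_contra h
    rw [not_nonempty_iff] at h
    simpa using hp.2
  have hβ0 : 0 ≤ β := le_trans
    (sum_nonneg fun x _ => mul_nonneg (hp.1 x) (sum_nonneg fun y _ => hV.1 x y)) (hβ hΩ.some)
  have hlin : ∀ c : I → Ω,
      ∑ x, p x * ∑ y ∈ S'.biUnion (fun i => T (c i)), V x y ≤ L * β := by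
    intro c
    calc ∑ x, p x * ∑ y ∈ S'.biUnion (fun i => T (c i)), V x y
        ≤ ∑ x, p x * ∑ i ∈ S', ∑ y ∈ T (c i), V x y :=
          sum_le_sum fun x _ => mul_le_mul_of_nonneg_left
            (hV.sum_biUnion_le x S' fun i => T (c i)) (hp.1 x)
      _ = ∑ i ∈ S', ∑ x, p x * ∑ y ∈ T (c i), V x y := by
          simp_rw [mul_sum S']
          exact sum_comm
      _ ≤ ∑ i ∈ S', β := sum_le_sum fun i _ => hβ _
      _ = S'.card * β := by rw [sum_const, nsmul_eq_mul]
      _ ≤ L * β := by gcongr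
  have key := sum_prod_mul_prod_le_pow p hp (S \ S')
    (fun c x => Real.exp (∑ y ∈ S'.biUnion (fun i => T (c i)), V x y)) (1 + 2 * (L * β))
    (fun c x => (Real.exp_pos _).le)
    (fun c c' h => by
      have : S'.biUnion (fun i => T (c i)) = S'.biUnion (fun i => T (c' i)) :=
        biUnion_congr rfl fun i hi => by rw [h i (by simp [hi])]
      simp only [this])
    (fun c => by
      calc ∑ x, p x * Real.exp (∑ y ∈ S'.biUnion (fun i => T (c i)), V x y)
          ≤ ∑ x, p x * (1 + 2 * ∑ y ∈ S'.biUnion (fun i => T (c i)), V x y) :=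
            sum_le_sum fun x _ => mul_le_mul_of_nonneg_left
              (exp_le_one_add_two_mul (sum_nonneg fun y _ => hV.1 x y)
                (hV.sum_subset_le_one x _)) (hp.1 x)
        _ = 1 + 2 * ∑ x, p x * ∑ y ∈ S'.biUnion (fun i => T (c i)), V x y := by
            simp_rw [mul_add, sum_add_distrib, mul_one, hp.2, mul_sum univ]
            congr 1
            exact sum_congr rfl fun x _ => by ring
        _ ≤ _ := by linarith [hlin c])
  simp only [Real.exp_sum]
  simp only [Real.exp_sum] at key
  refine key.trans ?_
  have hcard : (S \ S').card ≤ L := (card_le_card sdiff_subset).trans hS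
  calc (1 + 2 * (L * β)) ^ (S \ S').card ≤ (1 + 2 * (L * β)) ^ L :=
        pow_le_pow_right₀ (by nlinarith [mul_nonneg (Nat.cast_nonneg (α := ℝ) L) hβ0]) hcard
    _ ≤ Real.exp (2 * (L * β)) ^ L :=
        pow_le_pow_left₀ (by positivity) (by linarith [Real.add_one_le_exp (2 * (L * β))]) _
    _ = _ := by
        rw [← Real.exp_nat_mul]
        congr 1
        ring

/-- Existence of a pool that is simultaneously good for two receivers. -/
lemma exists_pool {I Ω Υ Ζ MY MZ : Type*} [Fintype I] [Fintype Ω] [Fintype Υ] [Fintype Ζ]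
    [Fintype MY] [Fintype MZ] (p : Ω → ℝ) (hp : IsPMF p)
    (VY : Ω → Υ → ℝ) (hVY : IsChannel VY) (TY : Ω → Finset Υ) (βY : ℝ)
    (hβY : ∀ x', ∑ x, p x * ∑ y ∈ TY x', VY x y ≤ βY)
    (VZ : Ω → Ζ → ℝ) (hVZ : IsChannel VZ) (TZ : Ω → Finset Ζ) (βZ : ℝ)
    (hβZ : ∀ x', ∑ x, p x * ∑ y ∈ TZ x', VZ x y ≤ βZ)
    (SY : MY → Finset I) (LY : ℕ) (hSY : ∀ μ, (SY μ).card = LY)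
    (SZ : MZ → Finset I) (LZ : ℕ) (hSZ : ∀ μ, (SZ μ).card = LZ) (ε : ℝ)
    (hY : 2 * (Fintype.card MY : ℝ) ^ 2 * Real.exp (2 * LY * βY * LY - ε * LY) < 1)
    (hZ : 2 * (Fintype.card MZ : ℝ) ^ 2 * Real.exp (2 * LZ * βZ * LZ - ε * LZ) < 1) :
    ∃ c : I → Ω, (∀ i, p (c i) ≠ 0) ∧
      (∀ μ ν, ∑ i ∈ SY μ \ SY ν, ∑ y ∈ (SY ν).biUnion (fun i => TY (c i)), VY (c i) y ≤
        ε * LY) ∧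
      (∀ μ ν, ∑ i ∈ SZ μ \ SZ ν, ∑ y ∈ (SZ ν).biUnion (fun i => TZ (c i)), VZ (c i) y ≤
        ε * LZ) := by
  let XY : MY × MY → (I → Ω) → ℝ := fun q c => Real.exp (∑ i ∈ SY q.1 \ SY q.2,
    ∑ y ∈ (SY q.2).biUnion (fun i => TY (c i)), VY (c i) y - ε * LY)
  let XZ : MZ × MZ → (I → Ω) → ℝ := fun q c => Real.exp (∑ i ∈ SZ q.1 \ SZ q.2,
    ∑ y ∈ (SZ q.2).biUnion (fun i => TZ (c i)), VZ (c i) y - ε * LZ)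
  have hXY : ∀ q, ∑ c : I → Ω, (∏ i, p (c i)) * XY q c ≤
      Real.exp (2 * LY * βY * LY - ε * LY) := by
    intro q
    have := pool_exp_moment_le p hp VY hVY TY βY hβY (SY q.1) (SY q.2) LY (hSY _).le (hSY _).le
    simp only [XY, Real.exp_sub, ← mul_div_assoc, ← sum_div]
    gcongr
  have hXZ : ∀ q, ∑ c : I → Ω, (∏ i, p (c i)) * XZ q c ≤
      Real.exp (2 * LZ * βZ * LZ - ε * LZ) := by
    intro q
    have := pool_exp_moment_le p hp VZ hVZ TZ βZ hβZ (SZ q.1) (SZ q.2) LZ (hSZ _).le (hSZ _).le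
    simp only [XZ, Real.exp_sub, ← mul_div_assoc, ← sum_div]
    gcongr
  have htot : ∑ c : I → Ω, (∏ i, p (c i)) * (∑ q, XY q c + ∑ q, XZ q c) <
      ∑ c : I → Ω, (∏ i, p (c i)) * 1 := by
    have e1 : ∑ c : I → Ω, (∏ i, p (c i)) * (∑ q, XY q c + ∑ q, XZ q c) =
        ∑ q, ∑ c : I → Ω, (∏ i, p (c i)) * XY q c +
        ∑ q, ∑ c : I → Ω, (∏ i, p (c i)) * XZ q c := by
      simp_rw [mul_add, sum_add_distrib, mul_sum]
      rw [sum_comm, add_right_inj, sum_comm]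
    have e2 := sum_le_sum fun q (_ : q ∈ univ) => hXY q
    have e3 := sum_le_sum fun q (_ : q ∈ univ) => hXZ q
    rw [sum_const, card_univ, nsmul_eq_mul, Fintype.card_prod] at e2 e3
    push_cast at e2 e3
    rw [e1]
    simp only [mul_one]
    rw [sum_prod_pmf hp]
    nlinarith
  obtain ⟨c, -, hc⟩ := exists_lt_of_sum_lt htot
  have hw : 0 ≤ ∏ i, p (c i) := prod_nonneg fun i _ => hp.1 _
  have hne : ∏ i, p (c i) ≠ 0 := fun h => by simp [h] at hc
  have hlt := lt_of_mul_lt_mul_left hc hw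
  have hXY0 : ∀ q, 0 ≤ XY q c := fun q => (Real.exp_pos _).le
  have hXZ0 : ∀ q, 0 ≤ XZ q c := fun q => (Real.exp_pos _).le
  refine ⟨c, fun i => prod_ne_zero_iff.1 hne i (mem_univ i), fun μ ν => ?_, fun μ ν => ?_⟩
  · have h1 := single_le_sum (fun q _ => hXY0 q) (mem_univ (μ, ν))
    have h2 := sum_nonneg fun q (_ : q ∈ univ) => hXZ0 q
    have h3 : XY (μ, ν) c < 1 := by linarith
    have := Real.exp_lt_one_iff.1 h3
    linarith
  · have h1 := single_le_sum (fun q _ => hXZ0 q) (mem_univ (μ, ν))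
    have h2 := sum_nonneg fun q (_ : q ∈ univ) => hXY0 q
    have h3 : XZ (μ, ν) c < 1 := by linarith
    have := Real.exp_lt_one_iff.1 h3
    linarith

/-- The range of a map from a finite type, as a finset. -/
def rangeFinset {B I : Type*} [Fintype B] (f : B → I) : Finset I := univ.image f

lemma mem_rangeFinset {B I : Type*} [Fintype B] {f : B → I} {i : I} :
    i ∈ rangeFinset f ↔ ∃ b, f b = i := by
  simp [rangeFinset]

lemma card_rangeFinset {B I : Type*} [Fintype B] {f : B → I} (hf : Function.Injective f) :
    (rangeFinset f).card = Fintype.card B := by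
  rw [rangeFinset, card_image_of_injective _ hf, card_univ]

/-- Error bounds at one receiver when message `μ` is mapped, as the other receiver's message `n`
varies, uniformly onto the words indexed by the range of `σ μ`. -/
lemma receiver_errors_le {I Ω Υ B MU N : Type*} [Fintype I] [Fintype Υ] [Fintype B]
    [Fintype N] (V : Ω → Υ → ℝ) (hV : IsChannel V) (T : Ω → Finset Υ) (c : I → Ω) (ε l κ : ℝ)
    (hκ0 : 0 ≤ κ) (hκ : κ * Fintype.card B = Fintype.card N)
    (hmiss : ∀ i, ∑ y ∈ (T (c i))ᶜ, V (c i) y ≤ l)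
    (σ : MU → B → I) (hσ : ∀ μ, Function.Injective (σ μ)) (φ : MU → N → I)
    (hφ : ∀ μ (h : I → ℝ), ∑ n, h (φ μ n) = κ * ∑ b, h (σ μ b))
    (hagree : ∀ μ ν, μ ≠ ν → ∃ t : Finset B, (∀ b b', σ ν b' = σ μ b → b ∈ t) ∧
      (t.card : ℝ) ≤ ε * Fintype.card B)
    (hpool : ∀ μ ν, ∑ i ∈ rangeFinset (σ μ) \ rangeFinset (σ ν),
      ∑ y ∈ (rangeFinset (σ ν)).biUnion (fun i => T (c i)), V (c i) y ≤ ε * Fintype.card B) :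
    (∀ μ, ∑ n, ∑ y ∈ ((rangeFinset (σ μ)).biUnion (fun i => T (c i)))ᶜ, V (c (φ μ n)) y ≤
      Fintype.card N * l) ∧
    (∀ μ ν, μ ≠ ν →
      ∑ n, ∑ y ∈ (rangeFinset (σ ν)).biUnion (fun i => T (c i)), V (c (φ μ n)) y ≤
        Fintype.card N * (2 * ε)) := by
  refine ⟨fun μ => ?_, fun μ ν hne => ?_⟩
  · rw [hφ μ (fun i => ∑ y ∈ ((rangeFinset (σ μ)).biUnion (fun i => T (c i)))ᶜ, V (c i) y), ← hκ,
      mul_assoc]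
    refine mul_le_mul_of_nonneg_left ?_ hκ0
    calc _ ≤ ∑ b : B, l := by
          refine sum_le_sum fun b _ => le_trans ?_ (hmiss (σ μ b))
          refine sum_le_sum_of_subset_of_nonneg ?_ fun y _ _ => hV.1 _ y
          refine compl_subset_compl.2 ?_
          exact subset_biUnion_of_mem (fun i => T (c i)) (mem_rangeFinset.2 ⟨b, rfl⟩)
      _ = _ := by simp
  · rw [hφ μ (fun i => ∑ y ∈ (rangeFinset (σ ν)).biUnion (fun i => T (c i)), V (c i) y), ← hκ,
      mul_assoc]
    refine mul_le_mul_of_nonneg_left ?_ hκ0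
    set h : I → ℝ := fun i => ∑ y ∈ (rangeFinset (σ ν)).biUnion (fun i => T (c i)), V (c i) y
      with hh
    have e1 : ∑ b, h (σ μ b) = ∑ i ∈ rangeFinset (σ μ), h i :=
      (sum_image fun a _ b _ hab => hσ μ hab).symm
    have e2 := sum_inter_add_sum_sdiff (rangeFinset (σ μ)) (rangeFinset (σ ν)) h
    have e3 : ∑ i ∈ rangeFinset (σ μ) ∩ rangeFinset (σ ν), h i ≤
        ((rangeFinset (σ μ) ∩ rangeFinset (σ ν)).card : ℝ) := by
      rw [← nsmul_one, ← sum_const]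
      exact sum_le_sum fun i _ => hV.sum_subset_le_one _ _
    obtain ⟨t, ht, e7⟩ := hagree μ ν hne
    have e4 : (rangeFinset (σ μ) ∩ rangeFinset (σ ν)).card ≤ t.card := by
      refine le_trans (card_le_card fun i hi => ?_) (card_image_le (f := σ μ))
      obtain ⟨b, rfl⟩ := mem_rangeFinset.1 (mem_inter.1 hi).1
      obtain ⟨b', hb'⟩ := mem_rangeFinset.1 (mem_inter.1 hi).2
      exact mem_image_of_mem _ (ht b b' hb')
    have e5 : ((rangeFinset (σ μ) ∩ rangeFinset (σ ν)).card : ℝ) ≤ t.card := by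
      exact_mod_cast e4
    have e6 := hpool μ ν
    rw [e1, ← e2]
    linarith

/-- Finite-blocklength version of the direct part. -/
lemma exists_one_shot_code {Ω Υ Ζ A C D : Type*} [Fintype Ω] [Fintype Υ] [Fintype Ζ]
    [Fintype A] [Fintype C] [Fintype D] [AddCommGroup A] [AddCommGroup C] [AddCommGroup D]
    (p : Ω → ℝ) (hp : IsPMF p)
    (VY : Ω → Υ → ℝ) (hVY : IsChannel VY) (TY : Ω → Finset Υ) (βY : ℝ)
    (hβY : ∀ x', ∑ x, p x * ∑ y ∈ TY x', VY x y ≤ βY)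
    (VZ : Ω → Ζ → ℝ) (hVZ : IsChannel VZ) (TZ : Ω → Finset Ζ) (βZ : ℝ)
    (hβZ : ∀ x', ∑ x, p x * ∑ y ∈ TZ x', VZ x y ≤ βZ) (l ε : ℝ)
    (hmissY : ∀ x, p x ≠ 0 → ∑ y ∈ (TY x)ᶜ, VY x y ≤ l)
    (hmissZ : ∀ x, p x ≠ 0 → ∑ y ∈ (TZ x)ᶜ, VZ x y ≤ l)
    (hε0 : 0 ≤ ε) (hε1 : ε < 1) (k kY kZ : ℕ)
    (hF : (Fintype.card (Fin k × Fin kY × A) : ℝ) * Fintype.card D *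
      Real.exp (2 * Fintype.card (A × C) / Fintype.card D - ε * Fintype.card (A × C)) < 1)
    (hG : (Fintype.card (Fin k × Fin kZ × A) : ℝ) * Fintype.card C *
      Real.exp (2 * Fintype.card A / Fintype.card C - ε * Fintype.card A) < 1)
    (hY : 2 * (Fintype.card (Fin k × (Fin kY × A × D)) : ℝ) ^ 2 *
      Real.exp (2 * Fintype.card (A × C) * βY * Fintype.card (A × C) -
        ε * Fintype.card (A × C)) < 1)
    (hZ : 2 * (Fintype.card (Fin k × (Fin kZ × A × C)) : ℝ) ^ 2 *
      Real.exp (2 * Fintype.card (A × D) * βZ * Fintype.card (A × D) -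
        ε * Fintype.card (A × D)) < 1) :
    ∃ (x : Fin k → (Fin kY × A × D) → (Fin kZ × A × C) → Ω)
      (DY : Fin k × (Fin kY × A × D) → Finset Υ) (DZ : Fin k × (Fin kZ × A × C) → Finset Ζ),
      ((∀ μ, ∑ mz, ∑ y ∈ (DY μ)ᶜ, VY (x μ.1 μ.2 mz) y ≤
          Fintype.card (Fin kZ × A × C) * l) ∧
        ∀ μ ν, μ ≠ ν → ∑ mz, ∑ y ∈ DY ν, VY (x μ.1 μ.2 mz) y ≤
          Fintype.card (Fin kZ × A × C) * (2 * ε)) ∧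
      ((∀ μ, ∑ my, ∑ y ∈ (DZ μ)ᶜ, VZ (x μ.1 my μ.2) y ≤
          Fintype.card (Fin kY × A × D) * l) ∧
        ∀ μ ν, μ ≠ ν → ∑ my, ∑ y ∈ DZ ν, VZ (x μ.1 my μ.2) y ≤
          Fintype.card (Fin kY × A × D) * (2 * ε)) := by
  obtain ⟨F, hF⟩ := exists_shift_code (ι := Fin k × Fin kY × A) (B := A × C) (C := D) ε hε0 hε1 hF
  obtain ⟨G, hG⟩ := exists_shift_code (ι := Fin k × Fin kZ × A) (B := A) (C := C) ε hε0 hε1 hG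
  let σY : Fin k × (Fin kY × A × D) → A × C → A × C × D := fun μ b =>
    (b.1, b.2, F (μ.1, μ.2.1, μ.2.2.1) b + μ.2.2.2)
  let σZ : Fin k × (Fin kZ × A × C) → A × D → A × C × D := fun μ b =>
    (b.1, G (μ.1, μ.2.1, μ.2.2.1) b.1 + μ.2.2.2, b.2)
  have hσY : ∀ μ, Function.Injective (σY μ) := by
    rintro μ ⟨a, c⟩ ⟨a', c'⟩ h
    simp only [σY, Prod.mk.injEq] at h
    rw [h.1, h.2.1]
  have hσZ : ∀ μ, Function.Injective (σZ μ) := by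
    rintro μ ⟨a, c⟩ ⟨a', c'⟩ h
    simp only [σZ, Prod.mk.injEq] at h
    rw [h.1, h.2.2]
  let φ : Fin k → (Fin kY × A × D) → (Fin kZ × A × C) → A × C × D := fun m my mz =>
    σY (m, my) (my.2.1 + mz.2.1, G (m, mz.1, mz.2.1) (my.2.1 + mz.2.1) + mz.2.2)
  obtain ⟨c, hc, hcY, hcZ⟩ := exists_pool p hp VY hVY TY βY hβY VZ hVZ TZ βZ hβZ
    (fun μ => rangeFinset (σY μ)) (Fintype.card (A × C))
    (fun μ => card_rangeFinset (hσY μ))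
    (fun μ => rangeFinset (σZ μ)) (Fintype.card (A × D))
    (fun μ => card_rangeFinset (hσZ μ)) ε hY hZ
  refine ⟨fun m my mz => c (φ m my mz),
    fun μ => (rangeFinset (σY μ)).biUnion (fun i => TY (c i)),
    fun μ => (rangeFinset (σZ μ)).biUnion (fun i => TZ (c i)), ?_, ?_⟩
  · refine receiver_errors_le VY hVY TY c ε l kZ (Nat.cast_nonneg _) ?_
      (fun i => hmissY _ (hc i)) σY hσY (fun μ mz => φ μ.1 μ.2 mz) ?_ ?_ hcY
    · simp only [Fintype.card_prod, Fintype.card_fin]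
      push_cast
      ring
    · rintro ⟨m, y', t, v⟩ h
      simp only [φ]
      rw [Fintype.sum_prod_type]
      have : ∀ z' : Fin kZ, ∑ q : A × C, h (σY (m, y', t, v)
          (t + q.1, G (m, z', q.1) (t + q.1) + q.2)) = ∑ b, h (σY (m, y', t, v) b) := by
        intro z'
        rw [Fintype.sum_prod_type, Fintype.sum_prod_type]
        rw [← Equiv.sum_comp (Equiv.addLeft t) (fun a => ∑ q, h (σY (m, y', t, v) (a, q)))]
        refine sum_congr rfl fun s _ => ?_
        exact Equiv.sum_comp (Equiv.addLeft (G (m, z', s) (t + s)))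
          (fun q => h (σY (m, y', t, v) (t + s, q)))
      simp only [this]
      simp
    · rintro ⟨m, y', t, v⟩ ⟨m', y'', t', v'⟩ hne
      refine ⟨univ.filter fun b => F (m, y', t) b + v = F (m', y'', t') b + v', ?_,
        hF (m, y', t) (m', y'', t') v v' fun h => hne ?_⟩
      · intro b b' hb'
        simp only [σY, Prod.mk.injEq] at hb'
        obtain ⟨h1, h2, h3⟩ := hb'
        have : b' = b := Prod.ext h1 h2
        subst this
        exact mem_filter.2 ⟨mem_univ _, h3.symm⟩
      · simp only [Prod.mk.injEq] at h ⊢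
        tauto
  · refine receiver_errors_le VZ hVZ TZ c ε l kY (Nat.cast_nonneg _) ?_
      (fun i => hmissZ _ (hc i)) σZ hσZ (fun μ my => φ μ.1 my μ.2) ?_ ?_ hcZ
    · simp only [Fintype.card_prod, Fintype.card_fin]
      push_cast
      ring
    · rintro ⟨m, z', s, u⟩ h
      simp only [φ]
      rw [Fintype.sum_prod_type]
      have : ∀ y' : Fin kY, ∑ q : A × D, h (σY (m, y', q)
          (q.1 + s, G (m, z', s) (q.1 + s) + u)) = ∑ b, h (σZ (m, z', s, u) b) := by
        intro y'
        rw [Fintype.sum_prod_type, Fintype.sum_prod_type]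
        rw [← Equiv.sum_comp (Equiv.addRight s) (fun a => ∑ q, h (σZ (m, z', s, u) (a, q)))]
        refine sum_congr rfl fun t _ => ?_
        refine Eq.trans ?_ (Equiv.sum_comp (Equiv.addLeft
          (F (m, y', t) (t + s, G (m, z', s) (t + s) + u)))
          (fun q => h (σZ (m, z', s, u) (t + s, q))))
        refine sum_congr rfl fun v _ => ?_
        simp only [σY, σZ, Equiv.coe_addLeft]
      simp only [this]
      simp
    · rintro ⟨m, z', s, u⟩ ⟨m', z'', s', u'⟩ hne
      have hag := hG (m, z', s) (m', z'', s') u u' fun h => hne (by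
        simp only [Prod.mk.injEq] at h ⊢
        tauto)
      refine ⟨(univ.filter fun a => G (m, z', s) a + u = G (m', z'', s') a + u') ×ˢ
        (univ : Finset D), ?_, ?_⟩
      · intro b b' hb'
        simp only [σZ, Prod.mk.injEq] at hb'
        obtain ⟨h1, h2, h3⟩ := hb'
        have : b' = b := Prod.ext h1 h3
        subst this
        exact mem_product.2 ⟨mem_filter.2 ⟨mem_univ _, h2.symm⟩, mem_univ _⟩
      · rw [card_product, card_univ, Fintype.card_prod]
        push_cast
        rw [← mul_assoc]
        exact mul_le_mul_of_nonneg_right hag (Nat.cast_nonneg _)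

lemma isChannel_Wn {X Y : Type*} [Fintype Y] {W : X → Y → ℝ} (hW : IsChannel W) (n : ℕ) :
    IsChannel (Wn W n) := by
  refine ⟨fun x y => prod_nonneg fun i _ => hW.1 _ _, fun x => ?_⟩
  simp only [Wn]
  rw [← Fintype.prod_sum]
  simp [hW.2]

lemma isPMF_prod {I Ω : Type*} [Fintype I] [DecidableEq I] [Fintype Ω] {p : Ω → ℝ} (hp : IsPMF p) :
    IsPMF (fun c : I → Ω => ∏ i, p (c i)) :=
  ⟨fun _ => prod_nonneg fun _ _ => hp.1 _, sum_prod_pmf hp⟩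

/-- The output sequences whose information density with the input sequence `x` exceeds `n * r`. -/
def infoTypical {X Y : Type*} [Fintype X] [Fintype Y] (P : X → ℝ) (W : X → Y → ℝ) (n : ℕ) (r : ℝ)
    (x : Fin n → X) : Finset (Fin n → Y) :=
  univ.filter fun y => Real.exp (n * r) * ∏ i, ∑ x', P x' * W x' (y i) < Wn W n x y

lemma sum_infoTypical_le {X Y : Type*} [Fintype X] [Fintype Y] {P : X → ℝ} {W : X → Y → ℝ}
    (hW : IsChannel W) (n : ℕ) (r : ℝ) (x' : Fin n → X) :
    ∑ x : Fin n → X, (∏ i, P (x i)) * ∑ y ∈ infoTypical P W n r x', Wn W n x y ≤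
      Real.exp (-(n * r)) := by
  have h1 : ∀ y : Fin n → Y, ∑ x : Fin n → X, (∏ i, P (x i)) * Wn W n x y =
      ∏ i, ∑ x', P x' * W x' (y i) := by
    intro y
    rw [Fintype.prod_sum]
    exact sum_congr rfl fun x _ => prod_mul_distrib.symm
  calc _ = ∑ y ∈ infoTypical P W n r x', ∏ i, ∑ x', P x' * W x' (y i) := by
        simp_rw [mul_sum, ← h1]
        exact sum_comm
    _ ≤ ∑ y ∈ infoTypical P W n r x', Real.exp (-(n * r)) * Wn W n x' y := by
        refine sum_le_sum fun y hy => ?_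
        have := (mem_filter.1 hy).2.le
        rw [Real.exp_neg, ← div_eq_inv_mul, le_div_iff₀ (Real.exp_pos _), mul_comm]
        exact this
    _ ≤ _ := by
        rw [← mul_sum]
        exact mul_le_of_le_one_right (Real.exp_pos _).le
          ((isChannel_Wn hW n).sum_subset_le_one _ _)

/-- The mutual information as an expectation of the information density. -/
lemma mutInf_eq {X Y : Type*} [Fintype X] [Fintype Y] (P : X → ℝ) (W : X → Y → ℝ) :
    mutInf P W = ∑ x, ∑ y, P x * W x y * Real.log (W x y / ∑ x', P x' * W x' y) := by
  refine sum_congr rfl fun x _ => sum_congr rfl fun y _ => ?_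
  split_ifs with h
  · rw [h, zero_mul]
  · rfl

/-- Some exponential moment of the information density is below `exp (- s (I - η))`. -/
lemma exists_exp_moment_lt {X Y : Type*} [Fintype X] [Fintype Y] {P : X → ℝ} {W : X → Y → ℝ}
    (hP : IsPMF P) (hW : IsChannel W) {η : ℝ} (hη : 0 < η) :
    ∃ s κ : ℝ, 0 < s ∧ 0 < κ ∧
      ∑ x, ∑ y, P x * W x y * Real.exp (-(s * Real.log (W x y / ∑ x', P x' * W x' y))) ≤
        Real.exp (-(s * (mutInf P W - η)) - κ) := by
  set l : X → Y → ℝ := fun x y => Real.log (W x y / ∑ x', P x' * W x' y) with hl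
  obtain ⟨K, hK0, hK⟩ : ∃ K : ℝ, 0 < K ∧ ∀ x y, |l x y| ≤ K := by
    refine ⟨1 + ∑ x, ∑ y, |l x y|, by positivity, fun x y => ?_⟩
    have h1 := single_le_sum (f := fun y => |l x y|) (fun y _ => abs_nonneg _) (mem_univ y)
    have h2 := single_le_sum (f := fun x => ∑ y, |l x y|)
      (fun x _ => sum_nonneg fun y _ => abs_nonneg _) (mem_univ x)
    linarith
  set s : ℝ := min (1 / K) (η / (2 * K ^ 2)) with hs
  have hs0 : 0 < s := by positivity
  have hs1 : s * K ≤ 1 := by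
    have := min_le_left (1 / K) (η / (2 * K ^ 2))
    rwa [← hs, le_div_iff₀ hK0] at this
  have hs2 : s * (2 * K ^ 2) ≤ η := by
    have := min_le_right (1 / K) (η / (2 * K ^ 2))
    rwa [← hs, le_div_iff₀ (by positivity)] at this
  have hpw : ∑ x, ∑ y, P x * W x y = 1 := by
    simp_rw [← mul_sum, hW.2, mul_one, hP.2]
  refine ⟨s, s * η / 2, hs0, by positivity, ?_⟩
  calc ∑ x, ∑ y, P x * W x y * Real.exp (-(s * l x y))
      ≤ ∑ x, ∑ y, P x * W x y * (1 + s ^ 2 * K ^ 2 - s * l x y) := by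
        refine sum_le_sum fun x _ => sum_le_sum fun y _ => mul_le_mul_of_nonneg_left ?_
          (mul_nonneg (hP.1 x) (hW.1 x y))
        have h1 : |-(s * l x y)| ≤ s * K := by
          rw [abs_neg, abs_mul, abs_of_pos hs0]
          exact mul_le_mul_of_nonneg_left (hK x y) hs0.le
        have h2 := (abs_le.1 (Real.abs_exp_sub_one_sub_id_le (h1.trans hs1))).2
        have h3 : (-(s * l x y)) ^ 2 ≤ (s * K) ^ 2 := sq_le_sq.2 (h1.trans (le_abs_self _))
        nlinarith
    _ = (1 + s ^ 2 * K ^ 2) * ∑ x, ∑ y, P x * W x y - s * ∑ x, ∑ y, P x * W x y * l x y := by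
        simp_rw [mul_sum, ← sum_sub_distrib]
        exact sum_congr rfl fun x _ => sum_congr rfl fun y _ => by ring
    _ = 1 + (s ^ 2 * K ^ 2 - s * mutInf P W) := by
        rw [hpw, mutInf_eq]
        ring
    _ ≤ Real.exp (s ^ 2 * K ^ 2 - s * mutInf P W) := by
        rw [add_comm]
        exact Real.add_one_le_exp _
    _ ≤ _ := by
        refine Real.exp_le_exp.2 ?_
        nlinarith

/-- The information density is concentrated exponentially well. -/
lemma exists_sum_compl_infoTypical_le {X Y : Type*} [Fintype X] [Fintype Y] {P : X → ℝ}
    {W : X → Y → ℝ} (hP : IsPMF P) (hW : IsChannel W) {η : ℝ} (hη : 0 < η) :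
    ∃ κ : ℝ, 0 < κ ∧ ∀ n : ℕ, ∑ x : Fin n → X, (∏ i, P (x i)) *
      ∑ y ∈ (infoTypical P W n (mutInf P W - η) x)ᶜ, Wn W n x y ≤ Real.exp (-(n * κ)) := by
  obtain ⟨s, κ, hs, hκ, hmom⟩ := exists_exp_moment_lt hP hW hη
  refine ⟨κ, hκ, fun n => ?_⟩
  set r := mutInf P W - η with hr
  set t : X → Y → ℝ := fun x y =>
    P x * W x y * Real.exp (-(s * Real.log (W x y / ∑ x', P x' * W x' y))) with ht
  have ht0 : ∀ x y, 0 ≤ t x y := fun x y =>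
    mul_nonneg (mul_nonneg (hP.1 x) (hW.1 x y)) (Real.exp_pos _).le
  have hpt : ∀ x y, y ∈ (infoTypical P W n r x)ᶜ →
      (∏ i, P (x i)) * Wn W n x y ≤ Real.exp (n * (s * r)) * ∏ i, t (x i) (y i) := by
    intro x y hy
    by_cases h0 : (∏ i, P (x i)) * Wn W n x y = 0
    · rw [h0]
      exact mul_nonneg (Real.exp_pos _).le (prod_nonneg fun i _ => ht0 _ _)
    · have hne : ∀ i, 0 < P (x i) ∧ 0 < W (x i) (y i) := by
        intro i
        rw [Wn, ← prod_mul_distrib, ← ne_eq, prod_ne_zero_iff] at h0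
        have := h0 i (mem_univ i)
        exact ⟨(hP.1 _).lt_of_ne' (left_ne_zero_of_mul this),
          (hW.1 _ _).lt_of_ne' (right_ne_zero_of_mul this)⟩
      have hq : ∀ i, 0 < ∑ x', P x' * W x' (y i) := fun i =>
        (mul_pos (hne i).1 (hne i).2).trans_le (single_le_sum
          (f := fun x' => P x' * W x' (y i)) (fun x' _ => mul_nonneg (hP.1 x') (hW.1 x' _))
          (mem_univ (x i)))
      have hle : Wn W n x y ≤ Real.exp (n * r) * ∏ i, ∑ x', P x' * W x' (y i) := by
        rw [mem_compl, infoTypical, mem_filter] at hy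
        exact not_lt.1 fun h => hy ⟨mem_univ _, h⟩
      have hlog : ∑ i, Real.log (W (x i) (y i) / ∑ x', P x' * W x' (y i)) ≤ n * r := by
        rw [← Real.log_prod fun i _ => (div_pos (hne i).2 (hq i)).ne',
          Real.log_le_iff_le_exp (prod_pos fun i _ => div_pos (hne i).2 (hq i)),
          prod_div_distrib, div_le_iff₀ (prod_pos fun i _ => hq i)]
        exact hle
      simp only [ht]
      rw [prod_mul_distrib, prod_mul_distrib, ← Real.exp_sum, mul_left_comm, ← Real.exp_add]
      refine le_mul_of_one_le_right (mul_nonneg (prod_nonneg fun i _ => hP.1 _)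
        (prod_nonneg fun i _ => hW.1 _ _)) (Real.one_le_exp ?_)
      rw [sum_neg_distrib, ← mul_sum]
      nlinarith
  calc _ = ∑ x : Fin n → X, ∑ y ∈ (infoTypical P W n r x)ᶜ, (∏ i, P (x i)) * Wn W n x y := by
        simp_rw [mul_sum]
    _ ≤ ∑ x : Fin n → X, ∑ y ∈ (infoTypical P W n r x)ᶜ,
          Real.exp (n * (s * r)) * ∏ i, t (x i) (y i) :=
        sum_le_sum fun x _ => sum_le_sum fun y hy => hpt x y hy
    _ ≤ ∑ x : Fin n → X, ∑ y : Fin n → Y, Real.exp (n * (s * r)) * ∏ i, t (x i) (y i) :=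
        sum_le_sum fun x _ => sum_le_sum_of_subset_of_nonneg (subset_univ _) fun y _ _ =>
          mul_nonneg (Real.exp_pos _).le (prod_nonneg fun i _ => ht0 _ _)
    _ = Real.exp (n * (s * r)) * (∑ x, ∑ y, t x y) ^ n := by
        rw [Fintype.sum_pow, mul_sum]
        refine sum_congr rfl fun x _ => ?_
        rw [← mul_sum, Fintype.prod_sum]
    _ ≤ Real.exp (n * (s * r)) * Real.exp (-(s * r) - κ) ^ n := by
        refine mul_le_mul_of_nonneg_left (pow_le_pow_left₀
          (sum_nonneg fun x _ => sum_nonneg fun y _ => ht0 x y) hmom n) (Real.exp_pos _).le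
    _ = _ := by
        rw [← Real.exp_nat_mul, ← Real.exp_add]
        congr 1
        ring

/-- Conditioning a probability mass function on an event of probability at least `1/2`. -/
lemma exists_conditioned_pmf {Ω : Type*} [Fintype Ω] {q : Ω → ℝ} (hq : IsPMF q)
    (f g : Ω → ℝ) (hf : ∀ x, 0 ≤ f x) (hg : ∀ x, 0 ≤ g x) {δ : ℝ} (hδ : 0 < δ)
    (hfδ : ∑ x, q x * f x ≤ δ) (hgδ : ∑ x, q x * g x ≤ δ) :
    ∃ p : Ω → ℝ, IsPMF p ∧ (∀ x, p x ≤ 2 * q x) ∧ (∀ x, p x ≠ 0 → f x ≤ 4 * δ) ∧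
      ∀ x, p x ≠ 0 → g x ≤ 4 * δ := by
  set w : Ω → ℝ := fun x => if f x ≤ 4 * δ ∧ g x ≤ 4 * δ then q x else 0 with hw
  have hw0 : ∀ x, 0 ≤ w x := fun x => by
    simp only [hw]
    split_ifs
    exacts [hq.1 x, le_rfl]
  have hhalf : 1 / 2 ≤ ∑ x, w x := by
    have h1 : ∀ x, q x - (q x * f x + q x * g x) / (4 * δ) ≤ w x := by
      intro x
      have h2 : 0 ≤ q x * f x := mul_nonneg (hq.1 x) (hf x)
      have h3 : 0 ≤ q x * g x := mul_nonneg (hq.1 x) (hg x)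
      simp only [hw]
      split_ifs with h
      · have : 0 ≤ (q x * f x + q x * g x) / (4 * δ) := by positivity
        linarith
      · rw [sub_nonpos, le_div_iff₀ (by positivity)]
        rw [not_and_or, not_le, not_le] at h
        rcases h with h | h
        · nlinarith [mul_le_mul_of_nonneg_left h.le (hq.1 x)]
        · nlinarith [mul_le_mul_of_nonneg_left h.le (hq.1 x)]
    have h4 := sum_le_sum fun x (_ : x ∈ univ) => h1 x
    rw [sum_sub_distrib, hq.2, ← sum_div, sum_add_distrib] at h4
    have h5 : (∑ x, q x * f x + ∑ x, q x * g x) / (4 * δ) ≤ 1 / 2 := by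
      rw [div_le_iff₀ (by positivity)]
      linarith
    linarith
  have hpos : 0 < ∑ x, w x := by linarith
  refine ⟨fun x => w x / ∑ x, w x, ⟨fun x => div_nonneg (hw0 x) hpos.le, ?_⟩, fun x => ?_,
    fun x hx => ?_, fun x hx => ?_⟩
  · rw [← sum_div, div_self hpos.ne']
  · rw [div_le_iff₀ hpos]
    have : w x ≤ q x := by
      simp only [hw]
      split_ifs
      exacts [le_rfl, hq.1 x]
    nlinarith [hq.1 x]
  · by_contra h
    exact hx (by simp [hw, h])
  · by_contra h
    exact hx (by simp [hw, h])

lemma sum_average_point_mass {Ω M : Type*} [Fintype Ω] [DecidableEq Ω] [Fintype M] (K : ℝ)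
    (x₀ : M → Ω) (g : Ω → ℝ) :
    ∑ x, (K⁻¹ * ∑ m, if x = x₀ m then (1 : ℝ) else 0) * g x = K⁻¹ * ∑ m, g (x₀ m) := by
  simp_rw [mul_assoc, ← mul_sum, sum_mul]
  rw [sum_comm]
  simp

/-- Passing from sums over the other receiver's messages to ID codes for mixtures. -/
lemma idCodeErr_of_sum_le {X Y M M' : Type*} [Fintype X] [Fintype Y] [Fintype M']
    {k K K' n : ℕ} {W : X → Y → ℝ} (e : Fin K ≃ M) (e' : Fin K' ≃ M') (hK : 0 < K')
    (hcard : Fintype.card M' = K') {x : Fin k → M → M' → Fin n → X}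
    {D : Fin k × M → Finset (Fin n → Y)} {l₁ l₂ : ℝ}
    (h₁ : ∀ μ, ∑ m', ∑ y ∈ (D μ)ᶜ, Wn W n (x μ.1 μ.2 m') y ≤ Fintype.card M' * l₁)
    (h₂ : ∀ μ ν, μ ≠ ν → ∑ m', ∑ y ∈ D ν, Wn W n (x μ.1 μ.2 m') y ≤ Fintype.card M' * l₂) :
    IDCodeErr n W
      (fun (p : Fin k × Fin K) x' =>
        (K' : ℝ)⁻¹ * ∑ m', if x' = x p.1 (e p.2) (e' m') then (1 : ℝ) else 0)
      (fun p => D (p.1, e p.2)) l₁ l₂ := by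
  have hK' : (0 : ℝ) < K' := by exact_mod_cast hK
  rw [hcard] at h₁ h₂
  constructor
  · intro p
    beta_reduce
    rw [sum_average_point_mass, inv_mul_le_iff₀ hK']
    rw [e'.sum_comp (fun m' => ∑ y ∈ (D (p.1, e p.2))ᶜ, Wn W n (x p.1 (e p.2) m') y)]
    exact h₁ (p.1, e p.2)
  · intro p q hpq
    beta_reduce
    rw [sum_average_point_mass, inv_mul_le_iff₀ hK']
    rw [e'.sum_comp (fun m' => ∑ y ∈ D (q.1, e q.2), Wn W n (x p.1 (e p.2) m') y)]
    refine h₂ (p.1, e p.2) (q.1, e q.2) fun h => hpq ?_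
    rw [Prod.mk.injEq, e.injective.eq_iff] at h
    exact Prod.ext h.1 h.2

lemma natCeil_exp_le {t : ℝ} (ht : 0 ≤ t) : (⌈Real.exp t⌉₊ : ℝ) ≤ 2 * Real.exp t := by
  have h1 := Nat.ceil_lt_add_one (Real.exp_pos t).le
  have h2 := Real.one_le_exp ht
  linarith

lemma eventually_le_exp_mul {a : ℝ} (ha : 0 < a) (b : ℝ) :
    ∀ᶠ n : ℕ in Filter.atTop, b ≤ Real.exp (n * a) := by
  have : Filter.Tendsto (fun n : ℕ => Real.exp (n * a)) Filter.atTop Filter.atTop :=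
    Real.tendsto_exp_atTop.comp (tendsto_natCast_atTop_atTop.atTop_mul_const ha)
  exact this.eventually_ge_atTop b

/-- A doubly exponential number of events is beaten by a doubly exponential tail of larger rate. -/
lemma eventually_double_exp_lt_one {J B σ : ℝ} (hJ : 0 < J) (hJB : J < B) (hσ : 0 ≤ σ) :
    ∀ᶠ n : ℕ in Filter.atTop,
      2 * (16 * Real.exp (2 * Real.exp (n * J) + n * σ)) ^ 2 *
        Real.exp (-(Real.exp (n * B) / 2)) < 1 := by
  filter_upwards [eventually_le_exp_mul (sub_pos.2 hJB) (2 * (516 + 2 * (σ / J)) + 1)] with n hn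
  set u := Real.exp (n * J) with hu
  have hu1 : 1 ≤ u := Real.one_le_exp (by positivity)
  have hB : Real.exp (n * B) = u * Real.exp (n * (B - J)) := by
    rw [hu, ← Real.exp_add]
    congr 1
    ring
  have hσu : n * σ ≤ σ / J * u := by
    have h1 : n * J ≤ u := by linarith [Real.add_one_le_exp (n * J : ℝ)]
    calc n * σ = σ / J * (n * J) := by field_simp
      _ ≤ _ := mul_le_mul_of_nonneg_left h1 (by positivity)
  have h512 : (512 : ℝ) ≤ Real.exp 512 := by linarith [Real.add_one_le_exp (512 : ℝ)]
  calc _ = 512 * Real.exp (4 * u + 2 * (n * σ) - Real.exp (n * B) / 2) := by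
        rw [mul_pow, ← Real.exp_nat_mul, sub_eq_add_neg (4 * u + 2 * (n * σ)), Real.exp_add _ (-_),
          show ((2 : ℕ) : ℝ) * (2 * u + n * σ) = 4 * u + 2 * (n * σ) by push_cast; ring]
        ring
    _ ≤ Real.exp 512 * Real.exp (4 * u + 2 * (n * σ) - Real.exp (n * B) / 2) :=
        mul_le_mul_of_nonneg_right h512 (Real.exp_pos _).le
    _ < 1 := by
        rw [← Real.exp_add, Real.exp_lt_one_iff, hB]
        nlinarith

lemma two_div_le_half_of_one_le_sq_mul {ε d : ℝ} (hε : 0 < ε) (h32 : 32 * ε ≤ 1)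
    (h : 1 ≤ ε * ε * d) : 2 / d ≤ ε / 2 := by
  have hd : 0 < d := pos_of_mul_pos_right (zero_lt_one.trans_le h) (mul_pos hε hε).le
  rw [div_le_iff₀ hd]
  nlinarith [mul_pos hε hd]

lemma sixteen_mul_le_half {ε : ℝ} (hε : 0 < ε) (h32 : 32 * ε ≤ 1) :
    16 * (ε * ε * (ε * ε)) ≤ ε / 2 := by
  have h : ε * ε ≤ 1 := by nlinarith
  nlinarith [mul_pos hε hε]

lemma union_bound_mono {N S E x : ℝ} (hN : 1 ≤ N) (hNS : N ≤ S) (hx : x ≤ -(E / 2))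
    (hS : 2 * S ^ 2 * Real.exp (-(E / 2)) < 1) :
    2 * N ^ 2 * Real.exp x < 1 ∧ N * Real.exp x < 1 := by
  have h1 : 2 * N ^ 2 * Real.exp x < 1 := by
    refine lt_of_le_of_lt ?_ hS
    gcongr
  refine ⟨h1, lt_of_le_of_lt ?_ h1⟩
  refine mul_le_mul_of_nonneg_right ?_ (Real.exp_pos _).le
  nlinarith

lemma sum_mul_infoTypical_le {X Y : Type*} [Fintype X] [Fintype Y] {P : X → ℝ} {W : X → Y → ℝ}
    (hW : IsChannel W) {n : ℕ} {p : (Fin n → X) → ℝ} (hp : ∀ x, p x ≤ 2 * ∏ i, P (x i)) (r : ℝ)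
    (x' : Fin n → X) :
    ∑ x, p x * ∑ y ∈ infoTypical P W n r x', Wn W n x y ≤ 2 * Real.exp (-(n * r)) := by
  refine le_trans ?_ (mul_le_mul_of_nonneg_left (sum_infoTypical_le (P := P) hW n r x')
    zero_le_two)
  rw [mul_sum]
  refine sum_le_sum fun x _ => ?_
  rw [← mul_assoc]
  exact mul_le_mul_of_nonneg_right (hp x) (sum_nonneg fun y _ => (isChannel_Wn hW n).1 x y)

set_option maxHeartbeats 400000 in
/-- The block code at a fixed, sufficiently large block length. -/
lemma exists_idCode_of_large {X Y Z : Type*} [Fintype X] [Fintype Y] [Fintype Z]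
    {P : X → ℝ} {V : X → Y → ℝ} {U : X → Z → ℝ} (hP : IsPMF P) (hV : IsChannel V)
    (hU : IsChannel U) {n : ℕ} {I I' η κ R RY RZ J J' : ℝ} (hη : 0 < η) (hI' : 4 * η ≤ I')
    (hII' : I' ≤ I) (hRJ : R ≤ J) (hRJ' : R ≤ J')
    (hRYJ : RY ≤ J) (hRZJ' : RZ ≤ J')
    (htypV : ∑ x : Fin n → X, (∏ i, P (x i)) * ∑ y ∈ (infoTypical P V n (I - η) x)ᶜ, Wn V n x y ≤
      Real.exp (-(n * κ)))
    (htypU : ∑ x : Fin n → X, (∏ i, P (x i)) * ∑ y ∈ (infoTypical P U n (I' - η) x)ᶜ, Wn U n x y ≤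
      Real.exp (-(n * κ)))
    (hn : 32 ≤ Real.exp (n * (η / 2)))
    (hJ : 2 * (16 * Real.exp (2 * Real.exp (n * J) + n * (I' - 3 * η))) ^ 2 *
        Real.exp (-(Real.exp (n * (I - 7 / 2 * η)) / 2)) < 1)
    (hJ' : 2 * (16 * Real.exp (2 * Real.exp (n * J') + n * (I - 3 * η))) ^ 2 *
        Real.exp (-(Real.exp (n * (I' - 9 / 2 * η)) / 2)) < 1) :
    ∃ (k kY kZ : ℕ) (x : Fin k → Fin kY → Fin kZ → Fin n → X)
      (DY : Fin k → Fin kY → Finset (Fin n → Y)) (DZ : Fin k → Fin kZ → Finset (Fin n → Z)),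
      IDCodeErr n V
        (fun (p : Fin k × Fin kY) x' =>
          (kZ : ℝ)⁻¹ * ∑ mz, if x' = x p.1 p.2 mz then (1 : ℝ) else 0)
        (fun p => DY p.1 p.2) (4 * Real.exp (-(n * κ))) (2 * Real.exp (-(n * (η / 2)))) ∧
      IDCodeErr n U
        (fun (p : Fin k × Fin kZ) x' =>
          (kY : ℝ)⁻¹ * ∑ my, if x' = x p.1 my p.2 then (1 : ℝ) else 0)
        (fun p => DZ p.1 p.2) (4 * Real.exp (-(n * κ))) (2 * Real.exp (-(n * (η / 2)))) ∧
      Real.exp (Real.exp (n * R)) ≤ k ∧ Real.exp (Real.exp (n * RY)) ≤ kY ∧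
      Real.exp (Real.exp (n * RZ)) ≤ kZ := by
  have hn0 : (0 : ℝ) ≤ n := n.cast_nonneg
  obtain ⟨p, hp, hpP, hpV, hpU⟩ := exists_conditioned_pmf (isPMF_prod (I := Fin n) hP)
    (fun x => ∑ y ∈ (infoTypical P V n (I - η) x)ᶜ, Wn V n x y)
    (fun x => ∑ y ∈ (infoTypical P U n (I' - η) x)ᶜ, Wn U n x y)
    (fun x => sum_nonneg fun y _ => (isChannel_Wn hV n).1 x y)
    (fun x => sum_nonneg fun y _ => (isChannel_Wn hU n).1 x y) (Real.exp_pos _) htypV htypU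
  set a := ⌈Real.exp (n * (I' - 4 * η))⌉₊ with ha
  set c := ⌈Real.exp (n * (I - I' + η))⌉₊ with hc
  set d := ⌈Real.exp (n * η)⌉₊ with hd
  set k := ⌈Real.exp (Real.exp (n * R))⌉₊ with hk
  set kY := ⌈Real.exp (Real.exp (n * RY))⌉₊ with hkY
  set kZ := ⌈Real.exp (Real.exp (n * RZ))⌉₊ with hkZ
  have ha1 : Real.exp (n * (I' - 4 * η)) ≤ a := Nat.le_ceil _
  have hc1 : Real.exp (n * (I - I' + η)) ≤ c := Nat.le_ceil _
  have hd1 : Real.exp (n * η) ≤ d := Nat.le_ceil _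
  have hk1 : Real.exp (Real.exp (n * R)) ≤ k := Nat.le_ceil _
  have hkY1 : Real.exp (Real.exp (n * RY)) ≤ kY := Nat.le_ceil _
  have hkZ1 : Real.exp (Real.exp (n * RZ)) ≤ kZ := Nat.le_ceil _
  have ha2 : (a : ℝ) ≤ 2 * Real.exp (n * (I' - 4 * η)) :=
    natCeil_exp_le (mul_nonneg hn0 (by linarith))
  have hc2 : (c : ℝ) ≤ 2 * Real.exp (n * (I - I' + η)) :=
    natCeil_exp_le (mul_nonneg hn0 (by linarith))
  have hd2 : (d : ℝ) ≤ 2 * Real.exp (n * η) := natCeil_exp_le (mul_nonneg hn0 hη.le)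
  have hk2 : (k : ℝ) ≤ 2 * Real.exp (Real.exp (n * R)) := natCeil_exp_le (Real.exp_pos _).le
  have hkY2 : (kY : ℝ) ≤ 2 * Real.exp (Real.exp (n * RY)) := natCeil_exp_le (Real.exp_pos _).le
  have hkZ2 : (kZ : ℝ) ≤ 2 * Real.exp (Real.exp (n * RZ)) := natCeil_exp_le (Real.exp_pos _).le
  clear_value a c d k kY kZ
  have hapos : (0 : ℝ) < a := (Real.exp_pos _).trans_le ha1
  have hcpos : (0 : ℝ) < c := (Real.exp_pos _).trans_le hc1
  have hdpos : (0 : ℝ) < d := (Real.exp_pos _).trans_le hd1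
  have hkYpos : (0 : ℝ) < kY := (Real.exp_pos _).trans_le hkY1
  have hkZpos : (0 : ℝ) < kZ := (Real.exp_pos _).trans_le hkZ1
  have ha1N : 1 ≤ a := by exact_mod_cast hapos
  have hc1N : 1 ≤ c := by exact_mod_cast hcpos
  have hd1N : 1 ≤ d := by exact_mod_cast hdpos
  have : NeZero a := ⟨by omega⟩
  have : NeZero c := ⟨by omega⟩
  have : NeZero d := ⟨by omega⟩
  set ε := Real.exp (-(n * (η / 2))) with hε
  have hε0 : 0 < ε := Real.exp_pos _
  clear_value ε
  have hε32 : 32 * ε ≤ 1 := by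
    rw [hε, Real.exp_neg, ← div_eq_mul_inv, div_le_one (Real.exp_pos _)]
    exact hn
  -- reciprocals of `c` and `d`, and the expected pairwise overlap, are small compared with `ε`
  have hηε : Real.exp (-(n * η)) = ε * ε := by
    rw [hε, ← Real.exp_add]
    congr 1
    ring
  have hdε : 2 / (d : ℝ) ≤ ε / 2 := by
    refine two_div_le_half_of_one_le_sq_mul hε0 hε32 ?_
    rw [← hηε, Real.exp_neg, ← div_eq_inv_mul, one_le_div (Real.exp_pos _)]
    exact hd1
  have hcε : 2 / (c : ℝ) ≤ ε / 2 := by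
    refine two_div_le_half_of_one_le_sq_mul hε0 hε32 ?_
    rw [← hηε, Real.exp_neg, ← div_eq_inv_mul, one_le_div (Real.exp_pos _)]
    refine le_trans (Real.exp_le_exp.2 ?_) hc1
    exact mul_le_mul_of_nonneg_left (by linarith) hn0
  have hac : (a : ℝ) * c ≤ 4 * Real.exp (n * (I - 3 * η)) := by
    refine (mul_le_mul ha2 hc2 hcpos.le (by positivity)).trans_eq ?_
    rw [mul_mul_mul_comm, ← Real.exp_add]
    ring_nf
  have had : (a : ℝ) * d ≤ 4 * Real.exp (n * (I' - 3 * η)) := by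
    refine (mul_le_mul ha2 hd2 hdpos.le (by positivity)).trans_eq ?_
    rw [mul_mul_mul_comm, ← Real.exp_add]
    ring_nf
  have hsmall : 16 * Real.exp (-(n * (2 * η))) ≤ ε / 2 := by
    have h : Real.exp (-(n * (2 * η))) = ε * ε * (ε * ε) := by
      rw [← hηε, ← Real.exp_add]
      congr 1
      ring
    rw [h]
    exact sixteen_mul_le_half hε0 hε32
  have hβac : 2 * (a * c) * (2 * Real.exp (-(n * (I - η)))) ≤ ε / 2 := by
    refine le_trans ?_ hsmall
    calc 2 * (a * c) * (2 * Real.exp (-(n * (I - η))))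
        ≤ 2 * (4 * Real.exp (n * (I - 3 * η))) * (2 * Real.exp (-(n * (I - η)))) := by gcongr
      _ = 16 * (Real.exp (n * (I - 3 * η)) * Real.exp (-(n * (I - η)))) := by ring
      _ = _ := by rw [← Real.exp_add]; ring_nf
  have hβad : 2 * (a * d) * (2 * Real.exp (-(n * (I' - η)))) ≤ ε / 2 := by
    refine le_trans ?_ hsmall
    calc 2 * (a * d) * (2 * Real.exp (-(n * (I' - η))))
        ≤ 2 * (4 * Real.exp (n * (I' - 3 * η))) * (2 * Real.exp (-(n * (I' - η)))) := by gcongr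
      _ = 16 * (Real.exp (n * (I' - 3 * η)) * Real.exp (-(n * (I' - η)))) := by ring
      _ = _ := by rw [← Real.exp_add]; ring_nf
  -- the exponents of the union bounds
  have hEac : Real.exp (n * (I - 7 / 2 * η)) ≤ ε * (a * c) := by
    calc _ = ε * (Real.exp (n * (I' - 4 * η)) * Real.exp (n * (I - I' + η))) := by
          rw [hε, ← Real.exp_add, ← Real.exp_add]; ring_nf
      _ ≤ _ := by gcongr
  have hEa : Real.exp (n * (I' - 9 / 2 * η)) ≤ ε * a := by
    calc _ = ε * Real.exp (n * (I' - 4 * η)) := by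
          rw [hε, ← Real.exp_add]; ring_nf
      _ ≤ _ := by gcongr
  have hEad : Real.exp (n * (I' - 9 / 2 * η)) ≤ ε * (a * d) := by
    refine hEa.trans (mul_le_mul_of_nonneg_left ?_ hε0.le)
    exact le_mul_of_one_le_right hapos.le (by exact_mod_cast hd1N)
  -- the numbers of events in the union bounds
  have hNY : (k : ℝ) * (kY * (a * d)) ≤
      16 * Real.exp (2 * Real.exp (n * J) + n * (I' - 3 * η)) := by
    have h1 : Real.exp (n * R) ≤ Real.exp (n * J) := by gcongr
    have h2 : Real.exp (n * RY) ≤ Real.exp (n * J) := by gcongr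
    calc (k : ℝ) * (kY * (a * d)) ≤ (2 * Real.exp (Real.exp (n * J))) *
          ((2 * Real.exp (Real.exp (n * J))) * (4 * Real.exp (n * (I' - 3 * η)))) := by
          gcongr
          · exact hk2.trans (by gcongr)
          · exact hkY2.trans (by gcongr)
      _ = _ := by rw [two_mul (Real.exp (n * J)), Real.exp_add, Real.exp_add]; ring
  have hNZ : (k : ℝ) * (kZ * (a * c)) ≤
      16 * Real.exp (2 * Real.exp (n * J') + n * (I - 3 * η)) := by
    have h1 : Real.exp (n * R) ≤ Real.exp (n * J') := by gcongr
    have h2 : Real.exp (n * RZ) ≤ Real.exp (n * J') := by gcongr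
    calc (k : ℝ) * (kZ * (a * c)) ≤ (2 * Real.exp (Real.exp (n * J'))) *
          ((2 * Real.exp (Real.exp (n * J'))) * (4 * Real.exp (n * (I - 3 * η)))) := by
          gcongr
          · exact hk2.trans (by gcongr)
          · exact hkZ2.trans (by gcongr)
      _ = _ := by rw [two_mul (Real.exp (n * J')), Real.exp_add, Real.exp_add]; ring
  have hk1N : (1 : ℝ) ≤ k := (Real.one_le_exp (Real.exp_pos _).le).trans hk1
  have hkY1N : (1 : ℝ) ≤ kY := (Real.one_le_exp (Real.exp_pos _).le).trans hkY1
  have hkZ1N : (1 : ℝ) ≤ kZ := (Real.one_le_exp (Real.exp_pos _).le).trans hkZ1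
  have ha1R : (1 : ℝ) ≤ a := by exact_mod_cast ha1N
  have hc1R : (1 : ℝ) ≤ c := by exact_mod_cast hc1N
  have hd1R : (1 : ℝ) ≤ d := by exact_mod_cast hd1N
  have h1NY : 1 ≤ (k : ℝ) * (kY * (a * d)) :=
    one_le_mul_of_one_le_of_one_le hk1N
      (one_le_mul_of_one_le_of_one_le hkY1N (one_le_mul_of_one_le_of_one_le ha1R hd1R))
  have h1NZ : 1 ≤ (k : ℝ) * (kZ * (a * c)) :=
    one_le_mul_of_one_le_of_one_le hk1N
      (one_le_mul_of_one_le_of_one_le hkZ1N (one_le_mul_of_one_le_of_one_le ha1R hc1R))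
  have hacpos : (0 : ℝ) < a * c := mul_pos hapos hcpos
  have hadpos : (0 : ℝ) < a * d := mul_pos hapos hdpos
  obtain ⟨x, DY, DZ, ⟨hY1, hY2⟩, hZ1, hZ2⟩ := exists_one_shot_code
    (A := ZMod a) (C := ZMod c) (D := ZMod d) p hp
    (Wn V n) (isChannel_Wn hV n) (infoTypical P V n (I - η)) _
    (sum_mul_infoTypical_le hV hpP (I - η))
    (Wn U n) (isChannel_Wn hU n) (infoTypical P U n (I' - η)) _
    (sum_mul_infoTypical_le hU hpP (I' - η))
    (4 * Real.exp (-(n * κ))) ε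
    (fun x hx => by convert hpV x hx) (fun x hx => by convert hpU x hx) hε0.le (by linarith) k kY kZ
    (by
      have h := (union_bound_mono (x := 2 * (a * c) / d - ε * (a * c)) h1NY hNY (by
        have : 2 * ((a : ℝ) * c) / d ≤ ε / 2 * (a * c) := by
          rw [mul_div_right_comm]
          exact mul_le_mul_of_nonneg_right hdε hacpos.le
        linarith) hJ).2
      simp only [Fintype.card_prod, Fintype.card_fin, ZMod.card, Nat.cast_mul]
      refine lt_of_eq_of_lt ?_ h
      ring)
    (by
      have h := (union_bound_mono (x := 2 * a / c - ε * a) h1NZ hNZ (by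
        have : 2 * (a : ℝ) / c ≤ ε / 2 * a := by
          rw [mul_div_right_comm]
          exact mul_le_mul_of_nonneg_right hcε hapos.le
        linarith) hJ').2
      simp only [Fintype.card_prod, Fintype.card_fin, ZMod.card, Nat.cast_mul]
      refine lt_of_eq_of_lt ?_ h
      ring)
    (by
      have h := (union_bound_mono (x := 2 * (a * c) * (2 * Real.exp (-(n * (I - η)))) * (a * c) -
          ε * (a * c)) h1NY hNY (by
        have := mul_le_mul_of_nonneg_right hβac hacpos.le
        linarith) hJ).1
      simpa only [Fintype.card_prod, Fintype.card_fin, ZMod.card, Nat.cast_mul] using h)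
    (by
      have h := (union_bound_mono (x := 2 * (a * d) * (2 * Real.exp (-(n * (I' - η)))) * (a * d) -
          ε * (a * d)) h1NZ hNZ (by
        have := mul_le_mul_of_nonneg_right hβad hadpos.le
        linarith) hJ').1
      simpa only [Fintype.card_prod, Fintype.card_fin, ZMod.card, Nat.cast_mul] using h)
  have hcY : (kY : ℝ) ≤ Fintype.card (Fin kY × ZMod a × ZMod d) := by
    simp only [Fintype.card_prod, Fintype.card_fin, ZMod.card, Nat.cast_mul]
    exact le_mul_of_one_le_right hkYpos.le (one_le_mul_of_one_le_of_one_le ha1R hd1R)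
  have hcZ : (kZ : ℝ) ≤ Fintype.card (Fin kZ × ZMod a × ZMod c) := by
    simp only [Fintype.card_prod, Fintype.card_fin, ZMod.card, Nat.cast_mul]
    exact le_mul_of_one_le_right hkZpos.le (one_le_mul_of_one_le_of_one_le ha1R hc1R)
  let eY := (Fintype.equivFin (Fin kY × ZMod a × ZMod d)).symm
  let eZ := (Fintype.equivFin (Fin kZ × ZMod a × ZMod c)).symm
  refine ⟨k, _, _, fun m my mz => x m (eY my) (eZ mz), fun m my => DY (m, eY my),
    fun m mz => DZ (m, eZ mz), ?_, ?_, hk1, hkY1.trans hcY, hkZ1.trans hcZ⟩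
  · exact idCodeErr_of_sum_le eY eZ (by exact_mod_cast hkZpos.trans_le hcZ) rfl
      (fun μ => by convert hY1 μ) hY2
  · exact idCodeErr_of_sum_le (x := fun m mz my => x m my mz) eZ eY
      (by exact_mod_cast hkYpos.trans_le hcY) rfl (fun μ => by convert hZ1 μ) hZ2

lemma le_inv_mul_log_log {n : ℕ} {r : ℝ} {k : ℕ} (hn : 0 < n)
    (hk : Real.exp (Real.exp (n * r)) ≤ k) : r ≤ (1 / n) * Real.log (Real.log k) := by
  have hn' : (0 : ℝ) < n := by exact_mod_cast hn
  have h1 := (Real.le_log_iff_exp_le ((Real.exp_pos _).trans_le hk)).2 hk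
  have h2 := (Real.le_log_iff_exp_le ((Real.exp_pos _).trans_le h1)).2 h1
  rw [one_div, ← div_eq_inv_mul, le_div_iff₀ hn', mul_comm]
  exact h2

lemma mul_exp_neg_le {C a b : ℝ} {n : ℕ} (h : C ≤ Real.exp (n * (a - b))) :
    C * Real.exp (-(n * a)) ≤ Real.exp (-(n * b)) := by
  refine (mul_le_mul_of_nonneg_right h (Real.exp_pos _).le).trans_eq ?_
  rw [← Real.exp_add]
  ring_nf

lemma IDCodeErr.mono {X Y M : Type*} [Fintype X] [Fintype Y] {n : ℕ} {W : X → Y → ℝ}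
    {Q : M → (Fin n → X) → ℝ} {D : M → Finset (Fin n → Y)} {l₁ l₂ l₁' l₂' : ℝ}
    (h : IDCodeErr n W Q D l₁ l₂) (h₁ : l₁ ≤ l₁') (h₂ : l₂ ≤ l₂') :
    IDCodeErr n W Q D l₁' l₂' :=
  ⟨fun m => (h.1 m).trans h₁, fun m m' hm => (h.2 m m' hm).trans h₂⟩

/-- The coding theorem in terms of the two marginal channels, the first having the larger mutual
information. -/
lemma exists_idCode_of_mutInf_le {X Y Z : Type*} [Fintype X] [Fintype Y] [Fintype Z]
    {P : X → ℝ} {V : X → Y → ℝ} {U : X → Z → ℝ} (hP : IsPMF P) (hV : IsChannel V)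
    (hU : IsChannel U) {R RY RZ : ℝ} (hR : 0 < R)
    (hle : mutInf P U ≤ mutInf P V) (hRV : R < mutInf P V) (hRU : R < mutInf P U)
    (hRYV : RY < mutInf P V) (hRZU : RZ < mutInf P U) :
    ∃ τ : ℝ, 0 < τ ∧ ∃ n₀ : ℕ, ∀ n : ℕ, n₀ ≤ n →
      ∃ (k kY kZ : ℕ) (x : Fin k → Fin kY → Fin kZ → Fin n → X)
        (DY : Fin k → Fin kY → Finset (Fin n → Y)) (DZ : Fin k → Fin kZ → Finset (Fin n → Z)),
        IDCodeErr n V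
          (fun (p : Fin k × Fin kY) x' =>
            (kZ : ℝ)⁻¹ * ∑ mz, if x' = x p.1 p.2 mz then (1 : ℝ) else 0)
          (fun p => DY p.1 p.2) (Real.exp (-(n * τ))) (Real.exp (-(n * τ))) ∧
        IDCodeErr n U
          (fun (p : Fin k × Fin kZ) x' =>
            (kY : ℝ)⁻¹ * ∑ my, if x' = x p.1 my p.2 then (1 : ℝ) else 0)
          (fun p => DZ p.1 p.2) (Real.exp (-(n * τ))) (Real.exp (-(n * τ))) ∧
        R ≤ (1 / n) * Real.log (Real.log k) ∧ RY ≤ (1 / n) * Real.log (Real.log kY) ∧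
        RZ ≤ (1 / n) * Real.log (Real.log kZ) := by
  obtain ⟨J, hRJ, hRYJ, hJ⟩ : ∃ J, R ≤ J ∧ RY ≤ J ∧ J < mutInf P V :=
    ⟨max R RY, le_max_left _ _, le_max_right _ _, max_lt hRV hRYV⟩
  obtain ⟨J', hRJ', hRZJ', hJ'⟩ : ∃ J', R ≤ J' ∧ RZ ≤ J' ∧ J' < mutInf P U :=
    ⟨max R RZ, le_max_left _ _, le_max_right _ _, max_lt hRU hRZU⟩
  obtain ⟨η, hη, hηJ, hηJ'⟩ : ∃ η, 0 < η ∧ 10 * η ≤ mutInf P V - J ∧ 10 * η ≤ mutInf P U - J' := by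
    refine ⟨min (mutInf P V - J) (mutInf P U - J') / 10,
      div_pos (lt_min (by linarith) (by linarith)) (by norm_num), ?_, ?_⟩
    · linarith [min_le_left (mutInf P V - J) (mutInf P U - J')]
    · linarith [min_le_right (mutInf P V - J) (mutInf P U - J')]
  obtain ⟨κ₁, hκ₁, hV'⟩ := exists_sum_compl_infoTypical_le hP hV hη
  obtain ⟨κ₂, hκ₂, hU'⟩ := exists_sum_compl_infoTypical_le hP hU hη
  obtain ⟨κ, hκ, hκκ₁, hκκ₂⟩ : ∃ κ, 0 < κ ∧ κ ≤ κ₁ ∧ κ ≤ κ₂ :=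
    ⟨min κ₁ κ₂, lt_min hκ₁ hκ₂, min_le_left _ _, min_le_right _ _⟩
  obtain ⟨τ, hτ, hτκ, hτη⟩ : ∃ τ, 0 < τ ∧ τ < κ ∧ τ < η / 2 := by
    obtain ⟨τ, h0, h⟩ := exists_between (lt_min hκ (half_pos hη))
    exact ⟨τ, h0, lt_min_iff.1 h⟩
  refine ⟨τ, hτ, Filter.eventually_atTop.1 ?_⟩
  filter_upwards [eventually_le_exp_mul (half_pos hη) 32,
    eventually_le_exp_mul (sub_pos.2 hτκ) 4, eventually_le_exp_mul (sub_pos.2 hτη) 2,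
    eventually_double_exp_lt_one (J := J) (B := mutInf P V - 7 / 2 * η)
      (σ := mutInf P U - 3 * η) (by linarith) (by linarith) (by linarith),
    eventually_double_exp_lt_one (J := J') (B := mutInf P U - 9 / 2 * η)
      (σ := mutInf P V - 3 * η) (by linarith) (by linarith) (by linarith),
    Filter.eventually_gt_atTop 0] with n h32 hnκ hnη hcV hcU hn
  have hn0 : (0 : ℝ) ≤ n := n.cast_nonneg
  obtain ⟨k, kY, kZ, x, DY, DZ, hY, hZ, hk, hkY, hkZ⟩ :=
    exists_idCode_of_large (κ := κ) hP hV hU hη (by linarith) hle hRJ hRJ' hRYJ hRZJ'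
      ((hV' n).trans (by gcongr)) ((hU' n).trans (by gcongr)) h32 hcV hcU
  exact ⟨k, kY, kZ, x, DY, DZ, hY.mono (mul_exp_neg_le hnκ) (mul_exp_neg_le hnη),
    hZ.mono (mul_exp_neg_le hnκ) (mul_exp_neg_le hnη), le_inv_mul_log_log hn hk,
    le_inv_mul_log_log hn hkY, le_inv_mul_log_log hn hkZ⟩

lemma isChannel_margY {X Y Z : Type*} [Fintype Y] [Fintype Z] {W : X → Y → Z → ℝ} (hW : IsBC W) :
    IsChannel (margY W) :=
  ⟨fun x y => sum_nonneg fun z _ => hW.1 x y z, hW.2⟩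

lemma isChannel_margZ {X Y Z : Type*} [Fintype Y] [Fintype Z] {W : X → Y → Z → ℝ} (hW : IsBC W) :
    IsChannel (margZ W) :=
  ⟨fun x z => sum_nonneg fun y _ => hW.1 x y z, fun x => by
    rw [← hW.2 x]
    exact sum_comm⟩

lemma isPMF_pointMass {Ω : Type*} [Fintype Ω] [DecidableEq Ω] (x₀ : Ω) :
    IsPMF fun x => if x = x₀ then (1 : ℝ) else 0 :=
  ⟨fun x => by positivity, by simp⟩

/-- **Claim 6.** Direct part for the BC with a common message,
with exponentially decaying error probabilities and deterministic encoders. -/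
theorem bc_cm_id_direct_part_deterministic
    {X Y Z : Type} [Fintype X] [Fintype Y] [Fintype Z]
    [Nonempty X] [Nonempty Y] [Nonempty Z]
    (W : X → Y → Z → ℝ) (hW : IsBC W)
    (P : X → ℝ) (hP : IsPMF P)
    (R RY RZ : ℝ)
    (hR0 : 0 < R) (hR : R < min (mutInf P (margY W)) (mutInf P (margZ W)))
    (hRY0 : 0 < RY) (hRY : RY < mutInf P (margY W))
    (hRZ0 : 0 < RZ) (hRZ : RZ < mutInf P (margZ W)) :
    ∃ τ : ℝ, 0 < τ ∧ ∃ n₀ : ℕ, ∀ n : ℕ, n₀ ≤ n →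
      ∃ (k kY kZ : ℕ) (Q : Fin k → Fin kY → Fin kZ → (Fin n → X) → ℝ)
        (DY : Fin k → Fin kY → Finset (Fin n → Y))
        (DZ : Fin k → Fin kZ → Finset (Fin n → Z)),
        IsCMIDCode n k kY kZ W Q DY DZ
          (Real.exp (-(n * τ))) (Real.exp (-(n * τ)))
          (Real.exp (-(n * τ))) (Real.exp (-(n * τ))) ∧
        R ≤ (1 / n) * Real.log (Real.log k) ∧
        RY ≤ (1 / n) * Real.log (Real.log kY) ∧
        RZ ≤ (1 / n) * Real.log (Real.log kZ) ∧
        ∀ m my mz, ∃ x0 : Fin n → X, ∀ x, Q m my mz x = if x = x0 then 1 else 0 := by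
  obtain ⟨hRV, hRU⟩ := lt_min_iff.1 hR
  rcases le_total (mutInf P (margZ W)) (mutInf P (margY W)) with h | h
  · obtain ⟨τ, hτ, n₀, hcode⟩ := exists_idCode_of_mutInf_le hP (isChannel_margY hW)
      (isChannel_margZ hW) hR0 h hRV hRU hRY hRZ
    refine ⟨τ, hτ, n₀, fun n hn => ?_⟩
    obtain ⟨k, kY, kZ, x, DY, DZ, hY, hZ, hk, hkY, hkZ⟩ := hcode n hn
    exact ⟨k, kY, kZ, fun m my mz x' => if x' = x m my mz then 1 else 0, DY, DZ,
      ⟨fun m my mz => isPMF_pointMass _, hY, hZ⟩, hk, hkY, hkZ, fun m my mz => ⟨_, fun _ => rfl⟩⟩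
  · obtain ⟨τ, hτ, n₀, hcode⟩ := exists_idCode_of_mutInf_le hP (isChannel_margZ hW)
      (isChannel_margY hW) hR0 h hRU hRV hRZ hRY
    refine ⟨τ, hτ, n₀, fun n hn => ?_⟩
    obtain ⟨k, kZ, kY, x, DZ, DY, hZ, hY, hk, hkZ, hkY⟩ := hcode n hn
    exact ⟨k, kY, kZ, fun m my mz x' => if x' = x m mz my then 1 else 0, DY, DZ,
      ⟨fun m my mz => isPMF_pointMass _, hY, hZ⟩, hk, hkY, hkZ, fun m my mz => ⟨_, fun _ => rfl⟩⟩
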